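/- Under Condition (★), for every integer h ≥ 2, the infinite product over prime elements ∏_p (1 + N(p)^{−1}/(1 − N(p)^{−1/h}))·(1 − 1/N(p)) converges and equals γ_h := ∏_p (1 + (N(p) − N(p)^{1/h})/(N(p)²(N(p)^{1/h} − 1))), which is itself a convergent infinite product. -/

import Mathlib

open Filter Topology Asymptotics
open scoped Classical

noncomputable section

/-- The norm on the free abelian monoid `P →₀ ℕ`, extended multiplicatively
from the norm `N` on the prime elements. -/
def Nm {P : Type*} (N : P → ℕ) (m : P →₀ ℕ) : ℕ :=
  m.prod fun p k => N p ^ k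

/-- The number of distinct prime elements generating `m`. -/
def omegaM {P : Type*} (m : P →₀ ℕ) : ℕ := m.support.card

/-- `m` is `h`-free: every multiplicity is at most `h - 1`. -/
def HFree {P : Type*} (h : ℕ) (m : P →₀ ℕ) : Prop := ∀ p, m p ≤ h - 1

/-- `m` is `h`-full: every nonzero multiplicity is at least `h`. -/
def HFull {P : Type*} (h : ℕ) (m : P →₀ ℕ) : Prop := ∀ p, m p = 0 ∨ h ≤ m p

/-- Condition (★): `#{m : N(m) ≤ x} = κ·x + O(x^θ)` with `κ > 0`, `0 ≤ θ < 1`. -/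
def StarCond {P : Type*} (N : P → ℕ) (κ θ : ℝ) : Prop :=
  0 < κ ∧ 0 ≤ θ ∧ θ < 1 ∧
    (fun x : ℝ => (({m : P →₀ ℕ | (Nm N m : ℝ) ≤ x}.ncard : ℝ) - κ * x))
      =O[atTop] fun x : ℝ => x ^ θ

/-- The generalized zeta function `ζ_M(s) = ∑_m N(m)^{-s}`. -/
def zetaM {P : Type*} (N : P → ℕ) (s : ℝ) : ℝ :=
  ∑' m : P →₀ ℕ, 1 / (Nm N m : ℝ) ^ s

/-- The constant `γ_h`. -/
def gammah {P : Type*} (N : P → ℕ) (h : ℕ) : ℝ :=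
  ∏' p : P, (1 + ((N p : ℝ) - (N p : ℝ) ^ (1 / (h : ℝ))) /
    ((N p : ℝ) ^ 2 * ((N p : ℝ) ^ (1 / (h : ℝ)) - 1)))

/-- `A` is the Mertens constant `𝔄` of the prime system:
`𝔄 = lim (∑_{N(p) ≤ x} 1/N(p) − log log x)`. -/
def IsMertens {P : Type*} (N : P → ℕ) (A : ℝ) : Prop :=
  Tendsto (fun x : ℝ =>
      (∑ᶠ p ∈ {p : P | (N p : ℝ) ≤ x}, 1 / (N p : ℝ)) - Real.log (Real.log x))
    atTop (𝓝 A)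

/-- The constant `𝔅 = -π²/6`. -/
def Bconst : ℝ := -(Real.pi ^ 2) / 6

/-- The constant `ℭ₁`, given the Mertens constant `A`. -/
def C1const {P : Type*} (N : P → ℕ) (h : ℕ) (A : ℝ) : ℝ :=
  A - ∑' p : P, ((N p : ℝ) - 1) / ((N p : ℝ) * ((N p : ℝ) ^ h - 1))

/-- The constant `ℭ₂`, given the Mertens constant `A`. -/
def C2const {P : Type*} (N : P → ℕ) (h : ℕ) (A : ℝ) : ℝ :=
  C1const N h A ^ 2 + C1const N h A + Bconst -
    ∑' p : P, (((N p : ℝ) ^ (h - 1) - 1) / ((N p : ℝ) ^ h - 1)) ^ 2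

/-- The convergent series `𝔏_h(r)`. -/
def LhSum {P : Type*} (N : P → ℕ) (h : ℕ) (r : ℝ) : ℝ :=
  ∑' p : P, 1 / ((N p : ℝ) ^ (r / (h : ℝ) - 1) *
    ((N p : ℝ) - (N p : ℝ) ^ (1 - 1 / (h : ℝ)) + 1))

/-- The constant `𝔇₁`, given the Mertens constant `A`. -/
def D1const {P : Type*} (N : P → ℕ) (h : ℕ) (A : ℝ) : ℝ :=
  A - Real.log (h : ℝ) + LhSum N h ((h : ℝ) + 1) - LhSum N h (2 * (h : ℝ))

/-- The constant `𝔇₂`, given the Mertens constant `A`. -/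
def D2const {P : Type*} (N : P → ℕ) (h : ℕ) (A : ℝ) : ℝ :=
  D1const N h A ^ 2 + D1const N h A + Bconst -
    ∑' p : P, (1 / ((N p : ℝ) - (N p : ℝ) ^ (1 - 1 / (h : ℝ)) + 1)) ^ 2

/-- The error term `R_{S_h}(x)` for `h`-free counts. -/
def RSfree (h : ℕ) (θ : ℝ) (x : ℝ) : ℝ :=
  if 1 / (h : ℝ) < θ then x ^ θ
  else if 1 / (h : ℝ) = θ then x ^ (1 / (h : ℝ)) * Real.log x
  else x ^ (1 / (h : ℝ))

/-- The error term `R_{N_h}(x)` for `h`-full counts. -/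
def RNfull (h : ℕ) (θ : ℝ) (x : ℝ) : ℝ :=
  if (h : ℝ) / ((h : ℝ) + 1) < θ then x ^ (θ / (h : ℝ))
  else if ∃ i : ℕ, 1 ≤ i ∧ i ≤ h - 1 ∧ θ = (h : ℝ) / ((h : ℝ) + (i : ℝ)) then
    x ^ (1 / ((h : ℝ) + 1)) * Real.log x
  else x ^ (1 / ((h : ℝ) + 1))

/-!
Condition (★) gives `I(x) = O(x)`, so by Abel summation `∑_m N(m)^{-s}`, and hence its subseries
`∑_p N(p)^{-s}`, converges for every `s > 1`. With `a = 1 / h`, corresponding factors of the two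
products agree, and they have the form `1 + u(N(p))` with `u(x) = O(x^{-(1 + a)})`, so
`∑_p u(N(p))` converges absolutely.
-/

section FiberCounting

variable {ι κ : Type*} {f : ι → κ}

theorem sum_ncard_preimage_singleton {t : Finset κ} (hf : ∀ k ∈ t, (f ⁻¹' {k}).Finite) :
    ∑ k ∈ t, (f ⁻¹' {k}).ncard = (f ⁻¹' t).ncard := by
  rw [← Set.biUnion_preimage_singleton f t,
    t.finite_toSet.ncard_biUnion hf (Set.pairwiseDisjoint_fiber f t),
    finsum_mem_coe_finset]

theorem summable_comp_iff_summable_ncard_mul {g : κ → ℝ} (hg : ∀ k, 0 ≤ g k)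
    (hf : ∀ k, (f ⁻¹' {k}).Finite) :
    Summable (fun i => g (f i)) ↔ Summable fun k => ((f ⁻¹' {k}).ncard : ℝ) * g k := by
  have fiber_unique (i : ι) : ∃! k, i ∈ f ⁻¹' {k} := ⟨f i, rfl, fun _ hk => hk.symm⟩
  have eq_on_fiber (k : κ) : (fun i : f ⁻¹' {k} => g (f i)) = fun _ => g k :=
    funext fun i => congrArg g i.2
  have fiber_finite (k : κ) : Finite (f ⁻¹' {k}) := hf k
  rw [summable_partition (fun i => hg (f i)) fiber_unique]
  simp only [eq_on_fiber, tsum_const, nsmul_eq_mul, Nat.card_coe_set_eq]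
  exact and_iff_right fun k => Summable.of_finite

end FiberCounting

theorem summable_rpow_neg_of_ncard_le_isBigO {ι : Type*} {f : ι → ℕ} [Northcott f] {r s : ℝ}
    (hr : 0 ≤ r) (hrs : r < s)
    (hcount : (fun n : ℕ => ({i | f i ≤ n}.ncard : ℝ)) =O[atTop] fun n : ℕ => (n : ℝ) ^ r) :
    Summable fun i => (f i : ℝ) ^ (-s) := by
  have finite_fiber (k : ℕ) : (f ⁻¹' {k}).Finite :=
    (Northcott.finite_le (h := f) k).subset fun _ hi => le_of_eq hi
  have partial_sum_le (n : ℕ) :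
      ∑ k ∈ Finset.Icc 1 n, ((f ⁻¹' {k}).ncard : ℝ) ≤ {i | f i ≤ n}.ncard := by
    have preimage_subset : f ⁻¹' ↑(Finset.Icc 1 n) ⊆ {i | f i ≤ n} := by grind
    rw [← Nat.cast_sum, sum_ncard_preimage_singleton fun k _ => finite_fiber k]
    exact Nat.cast_le.2 (Set.ncard_le_ncard preimage_subset (Northcott.finite_le (h := f) n))
  have partial_sum_isBigO :
      (fun n : ℕ => ∑ k ∈ Finset.Icc 1 n, ((f ⁻¹' {k}).ncard : ℝ)) =O[atTop]
        fun n : ℕ => (n : ℝ) ^ r :=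
    (isBigO_of_le _ fun n => by
      simpa only [Real.norm_of_nonneg, Nat.cast_nonneg, Finset.sum_nonneg, implies_true]
        using partial_sum_le n).trans hcount
  have lseries_summable : LSeriesSummable (fun k => (((f ⁻¹' {k}).ncard : ℝ) : ℂ)) s :=
    LSeriesSummable_of_sum_norm_bigO_and_nonneg partial_sum_isBigO
      (fun _ => Nat.cast_nonneg _) hr (by simpa using hrs)
  rw [summable_comp_iff_summable_ncard_mul (g := fun k : ℕ => (k : ℝ) ^ (-s))
    (fun k => by positivity) finite_fiber]
  refine lseries_summable.norm.congr fun k => ?_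
  rcases eq_or_ne k 0 with rfl | hk
  · simp [Real.zero_rpow (neg_ne_zero.2 (hr.trans_lt hrs).ne')]
  · simp [hk, Real.rpow_neg, div_eq_mul_inv]

theorem isLittleO_rpow_rpow_atTop {p q : ℝ} (hpq : p < q) :
    (fun x : ℝ => x ^ p) =o[atTop] fun x => x ^ q := by
  refine isLittleO_of_tendsto' ?_ <| (tendsto_rpow_neg_atTop (sub_pos.2 hpq)).congr' ?_
  · filter_upwards [eventually_gt_atTop 0] with x hx hxq
    exact absurd hxq (Real.rpow_pos_of_pos hx q).ne'
  · filter_upwards [eventually_gt_atTop 0] with x hx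
    rw [neg_sub, Real.rpow_sub hx]

namespace StarCond

variable {P : Type*} {N : P → ℕ} {κ θ : ℝ}

theorem ncard_Nm_le_isEquivalent (hstar : StarCond N κ θ) :
    (fun x : ℝ => ({m : P →₀ ℕ | (Nm N m : ℝ) ≤ x}.ncard : ℝ)) ~[atTop] fun x => κ * x := by
  obtain ⟨hκ, -, hθ, hcount⟩ := hstar
  have rpow_isLittleO : (fun x : ℝ => x ^ θ) =o[atTop] fun x : ℝ => x := by
    simpa using isLittleO_rpow_rpow_atTop hθ
  exact hcount.trans_isLittleO (rpow_isLittleO.const_mul_right hκ.ne')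

theorem northcott_Nm (hstar : StarCond N κ θ) : Northcott (Nm N) where
  finite_le b := by
    -- An infinite level set would have `ncard` equal to `0`, against the count `κ * x`.
    have eventually_pos : ∀ᶠ x : ℝ in atTop, 0 < {m : P →₀ ℕ | (Nm N m : ℝ) ≤ x}.ncard := by
      have tendsto_count := hstar.ncard_Nm_le_isEquivalent.symm.tendsto_atTop
        (tendsto_id.const_mul_atTop hstar.1)
      exact_mod_cast tendsto_count.eventually_gt_atTop 0
    obtain ⟨x, hx, hbx⟩ := (eventually_pos.and (eventually_ge_atTop (b : ℝ))).exists
    exact (Set.finite_of_ncard_pos hx).subset fun m hm => (Nat.cast_le.2 hm).trans hbx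

theorem summable_Nm_rpow_neg (hstar : StarCond N κ θ) {s : ℝ} (hs : 1 < s) :
    Summable fun m : P →₀ ℕ => (Nm N m : ℝ) ^ (-s) := by
  have := hstar.northcott_Nm
  refine summable_rpow_neg_of_ncard_le_isBigO zero_le_one hs ?_
  have count_isBigO :
      (fun x : ℝ => ({m : P →₀ ℕ | (Nm N m : ℝ) ≤ x}.ncard : ℝ)) =O[atTop] fun x => x :=
    hstar.ncard_Nm_le_isEquivalent.isBigO.trans (isBigO_const_mul_self κ _ atTop)
  simpa [Function.comp_def] using count_isBigO.comp_tendsto tendsto_natCast_atTop_atTop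

theorem summable_prime_rpow_neg (hstar : StarCond N κ θ) {s : ℝ} (hs : 1 < s) :
    Summable fun p => (N p : ℝ) ^ (-s) := by
  have summable_single := (hstar.summable_Nm_rpow_neg hs).comp_injective
    (Finsupp.single_left_injective one_ne_zero)
  simpa [Function.comp_def, Nm] using summable_single

end StarCond

theorem one_add_inv_div_one_sub_rpow_neg_mul {x a : ℝ} (hx : 1 < x) (ha : 0 < a) :
    (1 + x⁻¹ / (1 - x ^ (-a))) * (1 - 1 / x) =
      1 + (x - x ^ a) / (x ^ 2 * (x ^ a - 1)) := by
  have hx0 : 0 < x := one_pos.trans hx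
  have hxa : 0 < x ^ a - 1 := sub_pos.2 (Real.one_lt_rpow hx ha)
  have one_sub_rpow_neg : 1 - x ^ (-a) = (x ^ a - 1) / x ^ a := by
    rw [Real.rpow_neg hx0.le]
    field_simp
  rw [one_sub_rpow_neg]
  field_simp
  ring

theorem isBigO_sub_rpow_div_sq_mul_rpow_sub_one {a : ℝ} (ha : 0 < a) (ha1 : a ≤ 1) :
    (fun x : ℝ => (x - x ^ a) / (x ^ 2 * (x ^ a - 1))) =O[atTop] fun x => x ^ (-(1 + a)) := by
  refine IsBigO.of_bound 2 ?_
  filter_upwards [eventually_ge_atTop 1, (tendsto_rpow_atTop ha).eventually_ge_atTop 2]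
    with x hx hxa
  have hx0 : 0 < x := by positivity
  have hxa_le : x ^ a ≤ x := Real.rpow_le_self_of_one_le hx ha1
  have half_le : x ^ a / 2 ≤ x ^ a - 1 := by linarith
  have hxa_sub : 0 < x ^ a - 1 := by linarith
  rw [Real.norm_of_nonneg (by have := sub_nonneg.2 hxa_le; positivity),
    Real.norm_of_nonneg (by positivity)]
  calc (x - x ^ a) / (x ^ 2 * (x ^ a - 1))
      ≤ x / (x ^ 2 * (x ^ a / 2)) := by gcongr; linarith
    _ = 2 * x ^ (-(1 + a)) := by
      rw [Real.rpow_neg hx0.le, Real.rpow_add hx0, Real.rpow_one]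
      field_simp

section EulerProduct

variable {P : Type*} {N : P → ℝ}

theorem tendsto_cofinite_atTop_of_summable_rpow_neg (hN : ∀ p, 0 < N p) {s : ℝ} (hs : 0 < s)
    (hsum : Summable fun p => N p ^ (-s)) : Tendsto N cofinite atTop := by
  have rpow_tendsto : Tendsto (fun p => N p ^ (-s)) cofinite (𝓝[>] 0) :=
    tendsto_nhdsWithin_iff.2 ⟨hsum.tendsto_cofinite_zero,
      Eventually.of_forall fun p => Real.rpow_pos_of_pos (hN p) _⟩
  have inv_neg : (-s)⁻¹ < 0 := inv_lt_zero.2 (neg_lt_zero.2 hs)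
  refine ((tendsto_rpow_neg_nhdsGT_zero inv_neg).comp rpow_tendsto).congr fun p => ?_
  exact Real.rpow_rpow_inv (hN p).le (neg_ne_zero.2 hs.ne')

theorem gammah_product_general (hN : ∀ p, 1 < N p) {h : ℝ} (hh : 1 ≤ h)
    (hsum : Summable fun p => N p ^ (-(1 + 1 / h))) :
    Multipliable (fun p => (1 + (N p)⁻¹ / (1 - N p ^ (-(1 / h)))) * (1 - 1 / N p)) ∧
    Multipliable (fun p => 1 + (N p - N p ^ (1 / h)) / (N p ^ 2 * (N p ^ (1 / h) - 1))) ∧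
    ∏' p, ((1 + (N p)⁻¹ / (1 - N p ^ (-(1 / h)))) * (1 - 1 / N p)) =
      ∏' p, (1 + (N p - N p ^ (1 / h)) / (N p ^ 2 * (N p ^ (1 / h) - 1))) := by
  have inv_pos : 0 < 1 / h := by positivity
  have inv_le_one : 1 / h ≤ 1 := div_le_one_of_le₀ hh (by positivity)
  have tendsto_norm : Tendsto N cofinite atTop :=
    tendsto_cofinite_atTop_of_summable_rpow_neg (fun p => one_pos.trans (hN p))
      (by positivity) hsum
  have multipliable_factor :
      Multipliable fun p => 1 + (N p - N p ^ (1 / h)) / (N p ^ 2 * (N p ^ (1 / h) - 1)) :=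
    Real.multipliable_one_add_of_summable <| summable_of_isBigO hsum <|
      (isBigO_sub_rpow_div_sq_mul_rpow_sub_one inv_pos inv_le_one).comp_tendsto tendsto_norm
  have factor_eq (p : P) := one_add_inv_div_one_sub_rpow_neg_mul (hN p) inv_pos
  exact ⟨multipliable_factor.congr fun p => (factor_eq p).symm, multipliable_factor,
    tprod_congr factor_eq⟩

end EulerProduct

/-- The Euler-product identity for the constant `γ_h`. -/
theorem gammah_product {P : Type*} [Countable P] (N : P → ℕ)
    (hN : ∀ p, 2 ≤ N p) (κ θ : ℝ) (hstar : StarCond N κ θ)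
    (h : ℕ) (hh : 2 ≤ h) :
    Multipliable (fun p : P =>
      (1 + ((N p : ℝ))⁻¹ / (1 - (N p : ℝ) ^ (-(1 / (h : ℝ))))) *
        (1 - 1 / (N p : ℝ))) ∧
    Multipliable (fun p : P =>
      1 + ((N p : ℝ) - (N p : ℝ) ^ (1 / (h : ℝ))) /
        ((N p : ℝ) ^ 2 * ((N p : ℝ) ^ (1 / (h : ℝ)) - 1))) ∧
    (∏' p : P, ((1 + ((N p : ℝ))⁻¹ / (1 - (N p : ℝ) ^ (-(1 / (h : ℝ))))) *
        (1 - 1 / (N p : ℝ))))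
      = gammah N h := by
  exact gammah_product_general (fun p => Nat.one_lt_cast.2 (hN p))
    (Nat.one_le_cast.2 (one_le_two.trans hh))
    (hstar.summable_prime_rpow_neg (lt_add_of_pos_right 1 (by positivity)))
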